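/- arXiv:2108.09767 — 2 statements merged into one kernel-verified Lean document; each statement's English description precedes it below -/
import Mathlib

section
/- For any two policies π and π′ and any initial state distribution μ over S, ∥d^{π′}_μ − d^π_μ∥₁ ≤ (γ/(1−γ))·∥π′ − π∥_{∞,1}, where ∥·∥₁ is the total-variation (ℓ₁) norm on ℝ^S. -/
/-!
In the `ℓ₁` norm, `P^π` is nonexpansive and `P^{π'} - P^π` has operator norm at most
`∥π' - π∥_{∞,1}`. Each transition therefore adds at most this much to the distance between the
laws of `s_t` under `π'` and `π`, which is thus at most `t ∥π' - π∥_{∞,1}`. Averaging with the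
weights `(1 - γ) γ^t` gives the constant `(1 - γ) ∑ₜ t γ^t = γ / (1 - γ)`.
-/

open Finset

noncomputable section

/-- `π` is a stochastic policy: `π s` is a probability distribution over actions. -/
def IsPolicy {S A : Type*} [Fintype A] (π : S → A → ℝ) : Prop :=
  (∀ s a, 0 ≤ π s a) ∧ ∀ s, ∑ a, π s a = 1

/-- `P` is a transition probability model: `P s a` is a distribution over next states. -/
def IsKernel {S A : Type*} [Fintype S] (P : S → A → S → ℝ) : Prop :=
  (∀ s a s', 0 ≤ P s a s') ∧ ∀ s a, ∑ s', P s a s' = 1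

/-- `d` is a probability distribution over states. -/
def IsDist {S : Type*} [Fintype S] (d : S → ℝ) : Prop :=
  (∀ s, 0 ≤ d s) ∧ ∑ s, d s = 1

/-- The Markov operator `P^π` induced by policy `π` acting on distributions over states:
`(P^π d)(s') = ∑_s ∑_a P(s'|s,a)·π(a|s)·d(s)`. -/
def markovStep {S A : Type*} [Fintype S] [Fintype A] (P : S → A → S → ℝ)
    (π : S → A → ℝ) (d : S → ℝ) : S → ℝ :=
  fun s' => ∑ s, ∑ a, P s a s' * π s a * d s

/-- The discounted state-visitation distribution
`d^π_μ(s) = (1−γ) ∑_{t≥0} γ^t Pr(s_t = s | π, s₀ ∼ μ)`. -/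
def visitDist {S A : Type*} [Fintype S] [Fintype A] (P : S → A → S → ℝ) (γ : ℝ)
    (π : S → A → ℝ) (μ : S → ℝ) : S → ℝ :=
  fun s => (1 - γ) * ∑' t : ℕ, γ ^ t * ((markovStep P π)^[t] μ) s

/-- The value function `V^π_μ = E[∑_{t≥0} γ^t r(s_t,a_t)]` with `s₀ ∼ μ`, actions from `π`. -/
def valueV {S A : Type*} [Fintype S] [Fintype A] (P : S → A → S → ℝ) (r : S → A → ℝ)
    (γ : ℝ) (π : S → A → ℝ) (μ : S → ℝ) : ℝ :=
  ∑' t : ℕ, γ ^ t * ∑ s, ((markovStep P π)^[t] μ) s * ∑ a, π s a * r s a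

/-- The state-action value function
`Q^π(s,a) = E[∑_{t≥0} γ^t r(s_t,a_t) | s₀ = s, a₀ = a, actions thereafter from π]`. -/
def valueQ {S A : Type*} [Fintype S] [Fintype A] [DecidableEq S] (P : S → A → S → ℝ)
    (r : S → A → ℝ) (γ : ℝ) (π : S → A → ℝ) (s : S) (a : A) : ℝ :=
  r s a + γ * ∑ s', P s a s' * valueV P r γ π (fun s'' => if s'' = s' then 1 else 0)

/-- The functional policy gradient `(∇_π V^π_μ)(s,a) = (1/(1−γ))·d^π_μ(s)·Q^π(s,a)`. -/
def gradV {S A : Type*} [Fintype S] [Fintype A] [DecidableEq S] (P : S → A → S → ℝ)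
    (r : S → A → ℝ) (γ : ℝ) (π : S → A → ℝ) (μ : S → ℝ) : S → A → ℝ :=
  fun s a => (1 / (1 - γ)) * visitDist P γ π μ s * valueQ P r γ π s a

/-- The pairing `xᵀ y = ∑_{s,a} x(s,a)·y(s,a)` on `ℝ^{S×A}`. -/
def dotSA {S A : Type*} [Fintype S] [Fintype A] (x y : S → A → ℝ) : ℝ :=
  ∑ s, ∑ a, x s a * y s a

/-- The norm `∥x∥_{∞,1} = max_{s∈S} ∑_{a∈A} |x(s,a)|` on `ℝ^{S×A}`. -/
def normInfOne {S A : Type*} [Fintype S] [Fintype A] [Nonempty S] (x : S → A → ℝ) : ℝ :=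
  ⨆ s, ∑ a, |x s a|

/-- The `ℓ₁` (total-variation) norm `∥d∥₁ = ∑_{s∈S} |d s|` on `ℝ^S`. -/
def normL1 {S : Type*} [Fintype S] (d : S → ℝ) : ℝ := ∑ s, |d s|

section NormL1

variable {S : Type*} [Fintype S]

lemma normL1_nonneg (d : S → ℝ) : 0 ≤ normL1 d :=
  sum_nonneg fun s _ => abs_nonneg (d s)

lemma abs_apply_le_normL1 (d : S → ℝ) (s : S) : |d s| ≤ normL1 d :=
  single_le_sum (fun s _ => abs_nonneg (d s)) (mem_univ s)

lemma normL1_add_le (d e : S → ℝ) : normL1 (d + e) ≤ normL1 d + normL1 e :=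
  (sum_le_sum fun s _ => abs_add_le (d s) (e s)).trans_eq sum_add_distrib

lemma normL1_smul (c : ℝ) (d : S → ℝ) : normL1 (c • d) = |c| * normL1 d := by
  simp only [normL1, Pi.smul_apply, smul_eq_mul, abs_mul, mul_sum]

lemma normL1_tsum_le {ι : Type*} {f : ι → S → ℝ} {g : ι → ℝ} {b : ℝ} (hg : HasSum g b)
    (hfg : ∀ i, normL1 (f i) ≤ g i) : normL1 (fun s => ∑' i, f i s) ≤ b := by
  have hf (s : S) : Summable fun i => |f i s| :=
    .of_nonneg_of_le (fun i => abs_nonneg _)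
      (fun i => (abs_apply_le_normL1 (f i) s).trans (hfg i)) hg.summable
  calc normL1 (fun s => ∑' i, f i s)
      ≤ ∑ s, ∑' i, |f i s| :=
        sum_le_sum fun s _ => norm_tsum_le_tsum_norm (f := fun i => f i s) (hf s)
    _ ≤ b := hasSum_le hfg (hasSum_sum fun s _ => (hf s).hasSum) hg

lemma IsDist.normL1_eq_one {d : S → ℝ} (hd : IsDist d) : normL1 d = 1 :=
  (sum_congr rfl fun s _ => abs_of_nonneg (hd.1 s)).trans hd.2

lemma IsKernel.normL1_eq_one {A : Type*} {P : S → A → S → ℝ} (hP : IsKernel P) (s : S) (a : A) :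
    normL1 (P s a) = 1 :=
  IsDist.normL1_eq_one ⟨hP.1 s a, hP.2 s a⟩

end NormL1

section NormInfOne

variable {S A : Type*} [Fintype S] [Fintype A] [Nonempty S]

lemma normL1_apply_le_normInfOne (x : S → A → ℝ) (s : S) : normL1 (x s) ≤ normInfOne x :=
  le_ciSup (f := fun s => normL1 (x s)) (Set.finite_range _).bddAbove s

lemma normInfOne_nonneg (x : S → A → ℝ) : 0 ≤ normInfOne x :=
  Real.iSup_nonneg fun s => normL1_nonneg (x s)

lemma IsPolicy.normInfOne_eq_one {π : S → A → ℝ} (hπ : IsPolicy π) : normInfOne π = 1 := by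
  have h_row (s : S) : ∑ a, |π s a| = 1 := IsDist.normL1_eq_one ⟨hπ.1 s, hπ.2 s⟩
  simp only [normInfOne, h_row, ciSup_const]

end NormInfOne

section MarkovStep

variable {S A : Type*} [Fintype S] [Fintype A] {P : S → A → S → ℝ}

lemma markovStep_sub_markovStep (w w' : S → A → ℝ) (d d' : S → ℝ) :
    markovStep P w' d' - markovStep P w d =
      markovStep P w' (d' - d) + markovStep P (w' - w) d := by
  ext s'
  simp only [markovStep, Pi.sub_apply, Pi.add_apply, ← sum_sub_distrib, ← sum_add_distrib]
  exact sum_congr rfl fun s _ => sum_congr rfl fun a _ => by ring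

variable [Nonempty S]

lemma normL1_markovStep_le (hP : ∀ s a, normL1 (P s a) ≤ 1) (w : S → A → ℝ) (d : S → ℝ) :
    normL1 (markovStep P w d) ≤ normInfOne w * normL1 d := by
  calc normL1 (markovStep P w d)
      ≤ ∑ s', ∑ s, ∑ a, |P s a s' * w s a * d s| :=
        sum_le_sum fun s' _ => (abs_sum_le_sum_abs _ _).trans <|
          sum_le_sum fun s _ => abs_sum_le_sum_abs _ _
    _ = ∑ s, ∑ a, normL1 (P s a) * (|w s a| * |d s|) := by
        rw [sum_comm]
        refine sum_congr rfl fun s _ => ?_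
        rw [sum_comm]
        simp only [normL1, abs_mul, sum_mul, mul_assoc]
    _ ≤ ∑ s, ∑ a, |w s a| * |d s| :=
        sum_le_sum fun s _ => sum_le_sum fun a _ =>
          mul_le_of_le_one_left (by positivity) (hP s a)
    _ = ∑ s, normL1 (w s) * |d s| := by simp only [normL1, sum_mul]
    _ ≤ ∑ s, normInfOne w * |d s| := by
        gcongr with s
        exact normL1_apply_le_normInfOne w s
    _ = normInfOne w * normL1 d := (mul_sum _ _ _).symm

lemma normL1_markovStep_le_self (hP : ∀ s a, normL1 (P s a) ≤ 1) {w : S → A → ℝ}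
    (hw : normInfOne w ≤ 1) (d : S → ℝ) : normL1 (markovStep P w d) ≤ normL1 d :=
  (normL1_markovStep_le hP w d).trans (mul_le_of_le_one_left (normL1_nonneg d) hw)

lemma normL1_iterate_markovStep_le (hP : ∀ s a, normL1 (P s a) ≤ 1) {w : S → A → ℝ}
    (hw : normInfOne w ≤ 1) (d : S → ℝ) (t : ℕ) :
    normL1 ((markovStep P w)^[t] d) ≤ normL1 d := by
  induction t with
  | zero => exact le_rfl
  | succ t ih =>
    rw [Function.iterate_succ_apply']
    exact (normL1_markovStep_le_self hP hw _).trans ih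

lemma normL1_iterate_markovStep_sub_le (hP : ∀ s a, normL1 (P s a) ≤ 1) {w w' : S → A → ℝ}
    (hw : normInfOne w ≤ 1) (hw' : normInfOne w' ≤ 1) (d : S → ℝ) (t : ℕ) :
    normL1 ((markovStep P w')^[t] d - (markovStep P w)^[t] d) ≤
      t * (normInfOne (w' - w) * normL1 d) := by
  induction t with
  | zero => simp [normL1]
  | succ t ih =>
    set x := (markovStep P w)^[t] d
    set x' := (markovStep P w')^[t] d
    have h_drift : normL1 (markovStep P (w' - w) x) ≤ normInfOne (w' - w) * normL1 d :=
      (normL1_markovStep_le hP _ x).trans <|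
        mul_le_mul_of_nonneg_left (normL1_iterate_markovStep_le hP hw d t) (normInfOne_nonneg _)
    simp only [Function.iterate_succ_apply']
    calc normL1 (markovStep P w' x' - markovStep P w x)
        ≤ normL1 (markovStep P w' (x' - x)) + normL1 (markovStep P (w' - w) x) := by
          rw [markovStep_sub_markovStep]
          exact normL1_add_le _ _
      _ ≤ t * (normInfOne (w' - w) * normL1 d) + normInfOne (w' - w) * normL1 d :=
          add_le_add ((normL1_markovStep_le_self hP hw' _).trans ih) h_drift
      _ = (t + 1 : ℕ) * (normInfOne (w' - w) * normL1 d) := by push_cast; ring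

end MarkovStep

section VisitDist

variable {S A : Type*} [Fintype S] [Fintype A] [Nonempty S] {P : S → A → S → ℝ} {γ : ℝ}

lemma summable_discounted_iterate_markovStep (hP : ∀ s a, normL1 (P s a) ≤ 1)
    (hγ : γ ∈ Set.Ico (0 : ℝ) 1) {π : S → A → ℝ} (hπ : normInfOne π ≤ 1) (μ : S → ℝ) (s : S) :
    Summable fun t : ℕ => γ ^ t * ((markovStep P π)^[t] μ) s := by
  have h_geom := (summable_geometric_of_lt_one hγ.1 hγ.2).mul_right (normL1 μ)
  refine h_geom.of_norm_bounded fun t => ?_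
  rw [Real.norm_eq_abs, abs_mul, abs_of_nonneg (pow_nonneg hγ.1 t)]
  exact mul_le_mul_of_nonneg_left
    ((abs_apply_le_normL1 _ s).trans (normL1_iterate_markovStep_le hP hπ μ t)) (pow_nonneg hγ.1 t)

lemma visitDist_sub_visitDist (hP : ∀ s a, normL1 (P s a) ≤ 1) (hγ : γ ∈ Set.Ico (0 : ℝ) 1)
    {π π' : S → A → ℝ} (hπ : normInfOne π ≤ 1) (hπ' : normInfOne π' ≤ 1) (μ : S → ℝ) :
    visitDist P γ π' μ - visitDist P γ π μ = (1 - γ) • fun s =>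
      ∑' t : ℕ, (γ ^ t • ((markovStep P π')^[t] μ - (markovStep P π)^[t] μ)) s := by
  ext s
  simp only [visitDist, Pi.sub_apply, Pi.smul_apply, smul_eq_mul, mul_sub]
  rw [(summable_discounted_iterate_markovStep hP hγ hπ' μ s).tsum_sub
    (summable_discounted_iterate_markovStep hP hγ hπ μ s), mul_sub]

theorem visitation_distribution_lipschitz_general (hP : ∀ s a, normL1 (P s a) ≤ 1)
    (hγ : γ ∈ Set.Ico (0 : ℝ) 1) {π π' : S → A → ℝ} (hπ : normInfOne π ≤ 1)
    (hπ' : normInfOne π' ≤ 1) (μ : S → ℝ) :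
    normL1 (visitDist P γ π' μ - visitDist P γ π μ) ≤
      γ / (1 - γ) * normInfOne (π' - π) * normL1 μ := by
  have hγ_lt : 0 < 1 - γ := sub_pos.2 hγ.2
  set C := normInfOne (π' - π) * normL1 μ
  have h_sum : HasSum (fun t : ℕ => t * γ ^ t * C) (γ / (1 - γ) ^ 2 * C) :=
    (hasSum_coe_mul_geometric_of_norm_lt_one
      (by rw [Real.norm_of_nonneg hγ.1]; exact hγ.2)).mul_right C
  have h_term (t : ℕ) :
      normL1 (γ ^ t • ((markovStep P π')^[t] μ - (markovStep P π)^[t] μ)) ≤ t * γ ^ t * C := by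
    rw [normL1_smul, abs_of_nonneg (pow_nonneg hγ.1 t), mul_comm (t : ℝ), mul_assoc]
    exact mul_le_mul_of_nonneg_left (normL1_iterate_markovStep_sub_le hP hπ hπ' μ t)
      (pow_nonneg hγ.1 t)
  rw [visitDist_sub_visitDist hP hγ hπ hπ', normL1_smul, abs_of_pos hγ_lt]
  calc _ ≤ (1 - γ) * (γ / (1 - γ) ^ 2 * C) :=
        mul_le_mul_of_nonneg_left (normL1_tsum_le h_sum h_term) hγ_lt.le
    _ = γ / (1 - γ) * normInfOne (π' - π) * normL1 μ := by
        simp only [C]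
        field_simp

end VisitDist

/-- **Lipschitzness of the discounted state-visitation distribution.**
For any two policies `π, π'` and any initial state distribution `μ`,
`∥d^{π'}_μ − d^π_μ∥₁ ≤ (γ/(1−γ))·∥π' − π∥_{∞,1}`. -/
theorem visitation_distribution_lipschitz {S A : Type*} [Fintype S] [Fintype A] [Nonempty S]
    [Nonempty A] (P : S → A → S → ℝ) (r : S → A → ℝ) (γ : ℝ) (d₀ : S → ℝ)
    (hP : IsKernel P) (hr : ∀ s a, r s a ∈ Set.Icc (0 : ℝ) 1)
    (hγ : γ ∈ Set.Ico (0 : ℝ) 1) (hd₀ : IsDist d₀)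
    (π π' : S → A → ℝ) (hπ : IsPolicy π) (hπ' : IsPolicy π')
    (μ : S → ℝ) (hμ : IsDist μ) :
    normL1 (fun s => visitDist P γ π' μ s - visitDist P γ π μ s) ≤
      γ / (1 - γ) * normInfOne (fun s a => π' s a - π s a) := by
  have h_le := visitation_distribution_lipschitz_general (fun s a => (hP.normL1_eq_one s a).le) hγ
    hπ.normInfOne_eq_one.le hπ'.normInfOne_eq_one.le μ
  rwa [hμ.normL1_eq_one, mul_one] at h_le
end
end

section
/- Let 𝕡 and Π be finite nonempty sets of policies, let π* be an optimal policy (V^{π*} = V* = max over all policies of V^π), and suppose d^π(s) > 0 for every π ∈ 𝕡 and every s ∈ S, so that C∞(𝕡) = max_{π∈𝕡} max_{s∈S} d^{π*}(s)/d^π(s) is finite. Define the policy completeness E(𝕡, Π) = max_{π∈𝕡} min_{π′∈Π} E_{s∼d^π}[max_{a∈A} Q^π(s,a) − Σ_{a∈A} Q^π(s,a)·π′(a|s)]. Then for every π ∈ 𝕡: V* − V^π ≤ C∞(𝕡)·( E(𝕡, Π)/(1−γ) + max_{π′∈Π} (∇_π V^π)ᵀ(π′ − π) ). -/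
open Finset

noncomputable section

/-!
For a policy `π` with state transition matrix `T` and expected reward vector `R`, put
`N = (1 - γ T)⁻¹ = ∑ t, γ ^ t T ^ t`. Then `d^π = (1 - γ) μ N`, and the vector of state values is
`v = N R`, so that `V^π = μ v`. Since `μ N' (1 - γ T') = μ` for the matrices `T'`, `N'` of another
policy `ρ` with expected reward `R'`,
`(1 - γ) (V^ρ - V^π) = (1 - γ) μ N' (R' + γ T' v - v) = ∑ s, d^ρ(s) (∑ a, ρ(a|s) Q^π(s,a) - v(s))`,
which is the performance difference lemma.

Bounding the average over `ρ` by `max_a Q^π(s,a)` makes the summands nonnegative, so `d^ρ` may be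
exchanged for `d^π` at the price of `C∞`. The resulting gap of `π` is the gap of any `π'` plus
`(1 - γ) (∇_π V^π)ᵀ(π' - π)`; take for `π'` the minimiser in the completeness term.
-/

open Matrix

section RowStochastic

open scoped Matrix.Norms.Operator

variable {n : Type*} [Fintype n] [DecidableEq n] {M : Matrix n n ℝ}

lemma linfty_opNorm_le_one_of_mem_rowStochastic (hM : M ∈ rowStochastic ℝ n) : ‖M‖ ≤ 1 := by
  rw [linfty_opNorm_def, ← NNReal.coe_one, NNReal.coe_le_coe]
  refine Finset.sup_le fun i _ => ?_
  rw [← NNReal.coe_le_coe, NNReal.coe_sum, NNReal.coe_one, ← sum_row_of_mem_rowStochastic hM i]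
  exact (sum_congr rfl fun j _ => Real.norm_of_nonneg (nonneg_of_mem_rowStochastic hM)).le

lemma linfty_opNorm_smul_lt_one_of_mem_rowStochastic (hM : M ∈ rowStochastic ℝ n) {γ : ℝ}
    (hγ : |γ| < 1) : ‖γ • M‖ < 1 := by
  rw [norm_smul, Real.norm_eq_abs]
  exact mul_lt_one_of_nonneg_of_lt_one_left (abs_nonneg γ) hγ
    (linfty_opNorm_le_one_of_mem_rowStochastic hM)

lemma isUnit_one_sub_smul_of_mem_rowStochastic (hM : M ∈ rowStochastic ℝ n) {γ : ℝ}
    (hγ : |γ| < 1) : IsUnit (1 - γ • M) :=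
  isUnit_one_sub_of_norm_lt_one (linfty_opNorm_smul_lt_one_of_mem_rowStochastic hM hγ)

lemma hasSum_vecMul_smul_pow_of_mem_rowStochastic (hM : M ∈ rowStochastic ℝ n) {γ : ℝ}
    (hγ : |γ| < 1) (d : n → ℝ) :
    HasSum (fun t : ℕ => d ᵥ* (γ • M) ^ t) (d ᵥ* (1 - γ • M)⁻¹) := by
  have hN : HasSum (fun t : ℕ => (γ • M) ^ t) (1 - γ • M)⁻¹ := by
    rw [nonsing_inv_eq_ringInverse]
    exact hasSum_geom_series_inverse _ (linfty_opNorm_smul_lt_one_of_mem_rowStochastic hM hγ)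
  exact hN.map (AddMonoidHom.mk' (d ᵥ* ·) fun A B => vecMul_add A B d)
    (continuous_const.matrix_vecMul continuous_id)

end RowStochastic

section Policy

variable {S A : Type*} [Fintype A]

/-- The expectation of `f s a` for an action `a` drawn from the policy `π` in state `s`. -/
def actionAvg (π f : S → A → ℝ) (s : S) : ℝ := ∑ a, π s a * f s a

lemma actionAvg_le_iSup {π : S → A → ℝ} (hπ : IsPolicy π) (f : S → A → ℝ) (s : S) :
    actionAvg π f s ≤ ⨆ a, f s a :=
  calc ∑ a, π s a * f s a ≤ ∑ a, π s a * ⨆ a, f s a :=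
        sum_le_sum fun a _ =>
          mul_le_mul_of_nonneg_left (le_ciSup (Set.finite_range (f s)).bddAbove a) (hπ.1 s a)
    _ = ⨆ a, f s a := by rw [← sum_mul, hπ.2, one_mul]

end Policy

section MarkovDecisionProcess

variable {S A : Type*} [Fintype S] [Fintype A] {P : S → A → S → ℝ} {γ : ℝ}
  {π ρ : S → A → ℝ} {d : S → ℝ} {PP PiW : Finset (S → A → ℝ)}

/-- The state transition matrix of the Markov chain induced by the policy `π`, with distributions
over states acting on it as row vectors from the left. -/
def transitionMatrix (P : S → A → S → ℝ) (π : S → A → ℝ) : Matrix S S ℝ :=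
  .of fun s s' => ∑ a, π s a * P s a s'

lemma markovStep_eq_vecMul (P : S → A → S → ℝ) (π : S → A → ℝ) (d : S → ℝ) :
    markovStep P π d = d ᵥ* transitionMatrix P π := by
  ext s'
  simp only [markovStep, vecMul, dotProduct, transitionMatrix, of_apply, mul_sum]
  exact sum_congr rfl fun s _ => sum_congr rfl fun a _ => by ring

lemma transitionMatrix_mulVec (P : S → A → S → ℝ) (π : S → A → ℝ) (f : S → ℝ) :
    transitionMatrix P π *ᵥ f = actionAvg π fun s a => ∑ s', P s a s' * f s' := by
  ext s
  simp only [mulVec, dotProduct, transitionMatrix, of_apply, actionAvg, sum_mul, mul_sum,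
    mul_assoc]
  exact sum_comm

section SuccessorMatrix

variable [DecidableEq S]

lemma transitionMatrix_mem_rowStochastic (hP : IsKernel P) (hπ : IsPolicy π) :
    transitionMatrix P π ∈ rowStochastic ℝ S := by
  refine mem_rowStochastic_iff_sum.2
    ⟨fun s s' => sum_nonneg fun a _ => mul_nonneg (hπ.1 s a) (hP.1 s a s'), fun s => ?_⟩
  simp only [transitionMatrix, of_apply]
  rw [sum_comm]
  simp only [← mul_sum, hP.2, mul_one, hπ.2]

lemma iterate_markovStep (P : S → A → S → ℝ) (π : S → A → ℝ) (d : S → ℝ) (t : ℕ) :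
    (markovStep P π)^[t] d = d ᵥ* transitionMatrix P π ^ t := by
  induction t with
  | zero => simp
  | succ t ih =>
    rw [Function.iterate_succ_apply', ih, markovStep_eq_vecMul, vecMul_vecMul, pow_succ]

/-- The successor representation `(1 - γ T)⁻¹ = ∑ t, γ ^ t T ^ t` of the policy `π`, whose
`(s, s')` entry is the expected discounted number of visits to `s'` starting from `s`. -/
def successorMatrix (P : S → A → S → ℝ) (γ : ℝ) (π : S → A → ℝ) : Matrix S S ℝ :=
  (1 - γ • transitionMatrix P π)⁻¹

/-- The state value function `V^π(s)`, the value of `π` from the point mass at `s`. -/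
def stateValue (P : S → A → S → ℝ) (r : S → A → ℝ) (γ : ℝ) (π : S → A → ℝ) (s : S) : ℝ :=
  valueV P r γ π fun s' => if s' = s then 1 else 0

lemma successorMatrix_mul_one_sub_smul (hP : IsKernel P) (hγ : |γ| < 1) (hπ : IsPolicy π) :
    successorMatrix P γ π * (1 - γ • transitionMatrix P π) = 1 :=
  nonsing_inv_mul _ <| (isUnit_iff_isUnit_det _).1 <|
    isUnit_one_sub_smul_of_mem_rowStochastic (transitionMatrix_mem_rowStochastic hP hπ) hγ

lemma hasSum_iterate_markovStep (hP : IsKernel P) (hγ : |γ| < 1) (hπ : IsPolicy π) (d : S → ℝ) :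
    HasSum (fun t : ℕ => γ ^ t • (markovStep P π)^[t] d) (d ᵥ* successorMatrix P γ π) := by
  have h := hasSum_vecMul_smul_pow_of_mem_rowStochastic
    (transitionMatrix_mem_rowStochastic hP hπ) hγ d
  simpa only [successorMatrix, smul_pow, vecMul_smul, ← iterate_markovStep] using h

lemma visitDist_eq_vecMul_successorMatrix (hP : IsKernel P) (hγ : |γ| < 1) (hπ : IsPolicy π)
    (d : S → ℝ) : visitDist P γ π d = (1 - γ) • (d ᵥ* successorMatrix P γ π) := by
  ext s
  exact congrArg ((1 - γ) * ·)
    (Pi.hasSum.1 (hasSum_iterate_markovStep hP hγ hπ d) s).tsum_eq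

lemma valueV_eq_dotProduct_successorMatrix (hP : IsKernel P) (hγ : |γ| < 1) (hπ : IsPolicy π)
    (r : S → A → ℝ) (d : S → ℝ) :
    valueV P r γ π d = d ⬝ᵥ successorMatrix P γ π *ᵥ actionAvg π r := by
  have h := hasSum_sum (s := univ) fun s _ =>
    (Pi.hasSum.1 (hasSum_iterate_markovStep hP hγ hπ d) s).mul_right (actionAvg π r s)
  rw [dotProduct_mulVec, dotProduct, ← h.tsum_eq]
  simp only [valueV, actionAvg, Pi.smul_apply, smul_eq_mul, mul_assoc, mul_sum]

lemma stateValue_eq_successorMatrix_mulVec (hP : IsKernel P) (hγ : |γ| < 1) (hπ : IsPolicy π)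
    (r : S → A → ℝ) : stateValue P r γ π = successorMatrix P γ π *ᵥ actionAvg π r := by
  ext s
  simp only [stateValue, valueV_eq_dotProduct_successorMatrix hP hγ hπ, dotProduct, ite_mul,
    one_mul, zero_mul, sum_ite_eq', mem_univ, if_true]

lemma valueV_eq_dotProduct_stateValue (hP : IsKernel P) (hγ : |γ| < 1) (hπ : IsPolicy π)
    (r : S → A → ℝ) (d : S → ℝ) : valueV P r γ π d = d ⬝ᵥ stateValue P r γ π := by
  rw [valueV_eq_dotProduct_successorMatrix hP hγ hπ,
    stateValue_eq_successorMatrix_mulVec hP hγ hπ]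

end SuccessorMatrix

lemma visitDist_nonneg (hP : IsKernel P) (hγ : γ ∈ Set.Ico (0 : ℝ) 1) (hπ : IsPolicy π)
    (hd : ∀ s, 0 ≤ d s) (s : S) : 0 ≤ visitDist P γ π d s := by
  classical
  refine mul_nonneg (sub_nonneg.2 hγ.2.le)
    (tsum_nonneg fun t => mul_nonneg (pow_nonneg hγ.1 t) ?_)
  rw [iterate_markovStep]
  exact nonneg_vecMul_of_mem_rowStochastic
    (pow_mem (transitionMatrix_mem_rowStochastic hP hπ) t) hd s

lemma visitDist_dotProduct_actionAvg (hP : IsKernel P) (hγ : |γ| < 1) (hπ : IsPolicy π)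
    (r : S → A → ℝ) (d : S → ℝ) :
    visitDist P γ π d ⬝ᵥ actionAvg π r = (1 - γ) * valueV P r γ π d := by
  classical
  rw [visitDist_eq_vecMul_successorMatrix hP hγ hπ, smul_dotProduct, smul_eq_mul,
    ← dotProduct_mulVec, valueV_eq_dotProduct_successorMatrix hP hγ hπ]

lemma visitDist_dotProduct_sub_smul_mulVec (hP : IsKernel P) (hγ : |γ| < 1) (hπ : IsPolicy π)
    (d f : S → ℝ) :
    visitDist P γ π d ⬝ᵥ (f - γ • transitionMatrix P π *ᵥ f) = (1 - γ) * d ⬝ᵥ f := by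
  classical
  have hf : f - γ • transitionMatrix P π *ᵥ f = (1 - γ • transitionMatrix P π) *ᵥ f := by
    rw [sub_mulVec, one_mulVec, smul_mulVec]
  rw [visitDist_eq_vecMul_successorMatrix hP hγ hπ, hf, smul_dotProduct, smul_eq_mul,
    ← dotProduct_mulVec, mulVec_mulVec,
    successorMatrix_mul_one_sub_smul hP hγ hπ, one_mulVec]

/-- The concentrability coefficient `C∞(PP) = max_{π∈PP} max_s d^ρ(s)/d^π(s)`, for an arbitrary
comparison policy `ρ` in place of the optimal one. -/
def concentrability (P : S → A → S → ℝ) (γ : ℝ) (d : S → ℝ) (ρ : S → A → ℝ)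
    (PP : Finset (S → A → ℝ)) (hPP : PP.Nonempty) : ℝ :=
  PP.sup' hPP fun π => ⨆ s, visitDist P γ ρ d s / visitDist P γ π d s

lemma visitDist_div_le_concentrability (hPP : PP.Nonempty) (hπ : π ∈ PP) (P : S → A → S → ℝ)
    (γ : ℝ) (d : S → ℝ) (ρ : S → A → ℝ) (s : S) :
    visitDist P γ ρ d s / visitDist P γ π d s ≤ concentrability P γ d ρ PP hPP :=
  (le_ciSup (f := fun s => visitDist P γ ρ d s / visitDist P γ π d s)
    (Set.finite_range _).bddAbove s).trans
    (le_sup' (fun π => ⨆ s, visitDist P γ ρ d s / visitDist P γ π d s) hπ)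

lemma concentrability_nonneg (hP : IsKernel P) (hγ : γ ∈ Set.Ico (0 : ℝ) 1)
    (hPPpol : ∀ π ∈ PP, IsPolicy π) (hρ : IsPolicy ρ) (hd : ∀ s, 0 ≤ d s) (hPP : PP.Nonempty) :
    0 ≤ concentrability P γ d ρ PP hPP := by
  obtain ⟨π, hπ⟩ := hPP
  exact (Real.iSup_nonneg fun s => div_nonneg (visitDist_nonneg hP hγ hρ hd s)
    (visitDist_nonneg hP hγ (hPPpol π hπ) hd s)).trans
    (le_sup' (fun π => ⨆ s, visitDist P γ ρ d s / visitDist P γ π d s) hπ)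

variable [DecidableEq S]

lemma actionAvg_valueQ (P : S → A → S → ℝ) (r : S → A → ℝ) (γ : ℝ) (π ρ : S → A → ℝ) :
    actionAvg ρ (valueQ P r γ π) =
      actionAvg ρ r + γ • transitionMatrix P ρ *ᵥ stateValue P r γ π := by
  ext s
  simp only [transitionMatrix_mulVec, Pi.add_apply, Pi.smul_apply, smul_eq_mul, actionAvg,
    mul_sum (s := univ (α := A)), ← sum_add_distrib]
  exact sum_congr rfl fun a _ => by simp only [valueQ, stateValue]; ring

theorem stateValue_eq_actionAvg_valueQ (hP : IsKernel P) (hγ : |γ| < 1) (hπ : IsPolicy π)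
    (r : S → A → ℝ) : stateValue P r γ π = actionAvg π (valueQ P r γ π) := by
  have hv : (1 - γ • transitionMatrix P π) *ᵥ stateValue P r γ π = actionAvg π r := by
    rw [stateValue_eq_successorMatrix_mulVec hP hγ hπ, mulVec_mulVec,
      mul_eq_one_comm.1 (successorMatrix_mul_one_sub_smul hP hγ hπ), one_mulVec]
  rw [actionAvg_valueQ, ← hv, sub_mulVec, one_mulVec, smul_mulVec, sub_add_cancel]

theorem performance_difference (hP : IsKernel P) (hγ : |γ| < 1) (hπ : IsPolicy π)
    (hρ : IsPolicy ρ) (r : S → A → ℝ) (d : S → ℝ) :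
    (1 - γ) * (valueV P r γ ρ d - valueV P r γ π d) =
      visitDist P γ ρ d ⬝ᵥ
        (actionAvg ρ (valueQ P r γ π) - actionAvg π (valueQ P r γ π)) := by
  have hadv : actionAvg ρ (valueQ P r γ π) - actionAvg π (valueQ P r γ π) = actionAvg ρ r -
      (stateValue P r γ π - γ • transitionMatrix P ρ *ᵥ stateValue P r γ π) := by
    rw [← stateValue_eq_actionAvg_valueQ hP hγ hπ, actionAvg_valueQ]
    abel
  rw [hadv, dotProduct_sub, visitDist_dotProduct_actionAvg hP hγ hρ,
    visitDist_dotProduct_sub_smul_mulVec hP hγ hρ, ← valueV_eq_dotProduct_stateValue hP hγ hπ,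
    mul_sub]

lemma dotSA_gradV_sub (P : S → A → S → ℝ) (r : S → A → ℝ) (γ : ℝ) (π π' : S → A → ℝ)
    (d : S → ℝ) :
    dotSA (gradV P r γ π d) (fun s a => π' s a - π s a) =
      visitDist P γ π d ⬝ᵥ
        (actionAvg π' (valueQ P r γ π) - actionAvg π (valueQ P r γ π)) / (1 - γ) := by
  simp only [dotSA, gradV, dotProduct, Pi.sub_apply, actionAvg, ← sum_sub_distrib, mul_sum,
    sum_div]
  exact sum_congr rfl fun s _ => sum_congr rfl fun a _ => by ring

/-- The loss `max_a Q^π(s,a) - ∑_a Q^π(s,a) π'(a|s)` of the policy `π'` in state `s` against the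
greedy policy for `Q^π`. -/
def greedyGap (P : S → A → S → ℝ) (r : S → A → ℝ) (γ : ℝ) (π π' : S → A → ℝ) (s : S) : ℝ :=
  (⨆ a, valueQ P r γ π s a) - ∑ a, valueQ P r γ π s a * π' s a

lemma greedyGap_eq_iSup_sub_actionAvg (P : S → A → S → ℝ) (r : S → A → ℝ) (γ : ℝ)
    (π π' : S → A → ℝ) (s : S) :
    greedyGap P r γ π π' s =
      (⨆ a, valueQ P r γ π s a) - actionAvg π' (valueQ P r γ π) s := by
  simp only [greedyGap, actionAvg, mul_comm]

lemma actionAvg_sub_actionAvg_le_greedyGap (hρ : IsPolicy ρ) (P : S → A → S → ℝ)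
    (r : S → A → ℝ) (γ : ℝ) (π π' : S → A → ℝ) (s : S) :
    actionAvg ρ (valueQ P r γ π) s - actionAvg π' (valueQ P r γ π) s ≤
      greedyGap P r γ π π' s := by
  rw [greedyGap_eq_iSup_sub_actionAvg]
  exact sub_le_sub_right (actionAvg_le_iSup hρ _ s) _

lemma greedyGap_nonneg {π' : S → A → ℝ} (hπ' : IsPolicy π') (P : S → A → S → ℝ)
    (r : S → A → ℝ) (γ : ℝ) (π : S → A → ℝ) (s : S) : 0 ≤ greedyGap P r γ π π' s := by
  simpa only [sub_self] using actionAvg_sub_actionAvg_le_greedyGap hπ' P r γ π π' s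

lemma greedyGap_self_eq_add (P : S → A → S → ℝ) (r : S → A → ℝ) (γ : ℝ) (π π' : S → A → ℝ) :
    greedyGap P r γ π π = greedyGap P r γ π π' +
      (actionAvg π' (valueQ P r γ π) - actionAvg π (valueQ P r γ π)) := by
  ext s
  simp only [greedyGap_eq_iSup_sub_actionAvg, Pi.add_apply, Pi.sub_apply]
  ring

theorem valueV_sub_le_mul_greedyGap (hP : IsKernel P) (hγ : γ ∈ Set.Ico (0 : ℝ) 1)
    (hπ : IsPolicy π) (hρ : IsPolicy ρ) (hd : ∀ s, 0 ≤ d s) {C : ℝ}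
    (hC : ∀ s, visitDist P γ ρ d s ≤ C * visitDist P γ π d s) (r : S → A → ℝ) :
    (1 - γ) * (valueV P r γ ρ d - valueV P r γ π d) ≤
      C * visitDist P γ π d ⬝ᵥ greedyGap P r γ π π := by
  rw [performance_difference hP ((abs_of_nonneg hγ.1).trans_lt hγ.2) hπ hρ, ← smul_eq_mul,
    ← smul_dotProduct]
  refine sum_le_sum fun s _ => ?_
  calc _ ≤ visitDist P γ ρ d s * greedyGap P r γ π π s :=
        mul_le_mul_of_nonneg_left (actionAvg_sub_actionAvg_le_greedyGap hρ P r γ π π s)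
          (visitDist_nonneg hP hγ hρ hd s)
    _ ≤ C * visitDist P γ π d s * greedyGap P r γ π π s :=
        mul_le_mul_of_nonneg_right (hC s) (greedyGap_nonneg hπ P r γ π s)

theorem valueV_sub_le_greedyGap_add_gradV (hP : IsKernel P) (hγ : γ ∈ Set.Ico (0 : ℝ) 1)
    (hπ : IsPolicy π) (hρ : IsPolicy ρ) (hd : ∀ s, 0 ≤ d s) {C : ℝ}
    (hC : ∀ s, visitDist P γ ρ d s ≤ C * visitDist P γ π d s) (r π' : S → A → ℝ) :
    valueV P r γ ρ d - valueV P r γ π d ≤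
      C * (visitDist P γ π d ⬝ᵥ greedyGap P r γ π π' / (1 - γ) +
        dotSA (gradV P r γ π d) fun s a => π' s a - π s a) := by
  rw [dotSA_gradV_sub, ← add_div, ← dotProduct_add, ← greedyGap_self_eq_add, ← mul_div_assoc,
    le_div_iff₀' (sub_pos.2 hγ.2)]
  exact valueV_sub_le_mul_greedyGap hP hγ hπ hρ hd hC r

/-- The policy completeness `E(PP,PiW)`: how well, in the worst case over `π ∈ PP`, a member of
`PiW` approximates the greedy policy for `Q^π` on average over `d^π`. -/
def policyCompleteness (P : S → A → S → ℝ) (r : S → A → ℝ) (γ : ℝ) (d : S → ℝ)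
    (PP PiW : Finset (S → A → ℝ)) (hPP : PP.Nonempty) (hPiW : PiW.Nonempty) : ℝ :=
  PP.sup' hPP fun π => PiW.inf' hPiW fun π' => visitDist P γ π d ⬝ᵥ greedyGap P r γ π π'

lemma exists_visitDist_dotProduct_greedyGap_le (hPP : PP.Nonempty) (hPiW : PiW.Nonempty)
    (hπ : π ∈ PP) (P : S → A → S → ℝ) (r : S → A → ℝ) (γ : ℝ) (d : S → ℝ) :
    ∃ π' ∈ PiW, visitDist P γ π d ⬝ᵥ greedyGap P r γ π π' ≤
      policyCompleteness P r γ d PP PiW hPP hPiW := by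
  obtain ⟨π', hπ', hmin⟩ := exists_mem_eq_inf' hPiW fun π' =>
    visitDist P γ π d ⬝ᵥ greedyGap P r γ π π'
  exact ⟨π', hπ', hmin.symm.trans_le (le_sup' (fun π => PiW.inf' hPiW fun π' =>
    visitDist P γ π d ⬝ᵥ greedyGap P r γ π π') hπ)⟩

theorem gradient_domination_episodic_general (hP : IsKernel P) (hγ : γ ∈ Set.Ico (0 : ℝ) 1)
    (hd : IsDist d) (hPP : PP.Nonempty) (hPiW : PiW.Nonempty) (hPPpol : ∀ π ∈ PP, IsPolicy π)
    (hρ : IsPolicy ρ) (hpos : ∀ π ∈ PP, ∀ s, 0 < visitDist P γ π d s) (r : S → A → ℝ) :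
    ∀ π ∈ PP, valueV P r γ ρ d - valueV P r γ π d ≤
      concentrability P γ d ρ PP hPP *
        (policyCompleteness P r γ d PP PiW hPP hPiW / (1 - γ) +
          PiW.sup' hPiW fun π' => dotSA (gradV P r γ π d) fun s a => π' s a - π s a) := by
  intro π hπ
  obtain ⟨π', hπ', hgap⟩ := exists_visitDist_dotProduct_greedyGap_le hPP hPiW hπ P r γ d
  have hC : ∀ s, visitDist P γ ρ d s ≤ concentrability P γ d ρ PP hPP * visitDist P γ π d s :=
    fun s => (div_le_iff₀ (hpos π hπ s)).1 (visitDist_div_le_concentrability hPP hπ P γ d ρ s)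
  refine (valueV_sub_le_greedyGap_add_gradV hP hγ (hPPpol π hπ) hρ hd.1 hC r π').trans ?_
  refine mul_le_mul_of_nonneg_left (add_le_add ?_ ?_)
    (concentrability_nonneg hP hγ hPPpol hρ hd.1 hPP)
  · exact div_le_div_of_nonneg_right hgap (sub_nonneg.2 hγ.2.le)
  · exact le_sup' (fun π' => dotSA (gradV P r γ π d) fun s a => π' s a - π s a) hπ'

end MarkovDecisionProcess

/-- **Gradient domination of the value function (Lemma `lem:dom`).**
Let `PP` and `PiW` be finite nonempty sets of policies, `πstar` an optimal policy, and
suppose `d^π(s) > 0` for all `π ∈ PP`, `s ∈ S`, so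
`C∞(PP) = max_{π∈PP} max_s d^{πstar}(s)/d^π(s)` is finite. With policy completeness
`E(PP,PiW) = max_{π∈PP} min_{π'∈PiW} E_{s∼d^π}[max_a Q^π(s,a) − ∑_a Q^π(s,a)·π'(a|s)]`,
for every `π ∈ PP`:
`V* − V^π ≤ C∞(PP)·( E(PP,PiW)/(1−γ) + max_{π'∈PiW} (∇_π V^π)ᵀ(π' − π) )`. -/
theorem gradient_domination_episodic {S A : Type*} [Fintype S] [Fintype A] [Nonempty S]
    [Nonempty A] [DecidableEq S]
    (P : S → A → S → ℝ) (r : S → A → ℝ) (γ : ℝ) (d₀ : S → ℝ)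
    (hP : IsKernel P) (hr : ∀ s a, r s a ∈ Set.Icc (0 : ℝ) 1)
    (hγ : γ ∈ Set.Ico (0 : ℝ) 1) (hd₀ : IsDist d₀)
    (PP PiW : Finset (S → A → ℝ)) (hPPne : PP.Nonempty) (hPiWne : PiW.Nonempty)
    (hPPpol : ∀ π ∈ PP, IsPolicy π) (hPiWpol : ∀ π' ∈ PiW, IsPolicy π')
    (πstar : S → A → ℝ) (hπstar : IsPolicy πstar)
    (hopt : ∀ π : S → A → ℝ, IsPolicy π → valueV P r γ π d₀ ≤ valueV P r γ πstar d₀)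
    (hpos : ∀ π ∈ PP, ∀ s : S, 0 < visitDist P γ π d₀ s) :
    ∀ π ∈ PP,
      valueV P r γ πstar d₀ - valueV P r γ π d₀ ≤
        (PP.sup' hPPne fun π₁ => ⨆ s, visitDist P γ πstar d₀ s / visitDist P γ π₁ d₀ s) *
          ((PP.sup' hPPne fun π₁ => PiW.inf' hPiWne fun π₂ =>
              ∑ s, visitDist P γ π₁ d₀ s *
                ((⨆ a, valueQ P r γ π₁ s a) - ∑ a, valueQ P r γ π₁ s a * π₂ s a)) / (1 - γ) +
            PiW.sup' hPiWne fun π₂ =>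
              dotSA (gradV P r γ π d₀) fun s a => π₂ s a - π s a) :=
  gradient_domination_episodic_general hP hγ hd₀ hPPne hPiWne hPPpol hπstar hpos r
end
end
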